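/- arXiv:2103.03064 — 2 statements merged into one kernel-verified Lean document; each statement's English description precedes it below -/
import Mathlib

section
/- Let n ≥ 2 be an integer, H ∈ ℝ, k ≥ 0, and R > 0, where either H ≤ 0, or H > 0 and R ≤ π/(4√H). Let m : (0,R] → ℝ be C¹, f : [0,R] → ℝ be C² with |f(t)| ≤ k on [0,R], and ρ : [0,R] → [0,∞) be continuous. Assume: (i) m'(t) ≤ −m(t)²/(n−1) − (n−1)H + f''(t) + ρ(t) for all t ∈ (0,R); (ii) s_H(t)²·(m(t) − (n−1)·s_H'(t)/s_H(t)) → 0 as t → 0⁺. Then for every r ∈ (0,R], m(r) − f'(r) ≤ (n+4k−1)·s_H'(r)/s_H(r) + ∫₀ʳ ρ(t) dt. (Analytic form of the first part of Theorem 1.1(a): comparison with the model of 'dimension' n+4k.) -/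
/-!
Write `s = sH H` and `c = sH' H`, so that `s' = c` and `c' = -H s`. Completing the square in the
Riccati inequality gives `(s² m - (n-1) s c)' ≤ s² f'' + s² ρ`. Moving the two derivatives off `f`,
`s² f'' = (s² f' - 2 s c f)' + 2 (s c)' f`, and since `(s c)' = c² - H s² ≥ 0` on `[0, R]`
(this is where `R ≤ π / (4 √H)` enters), the last term is at most `2 k (s c)'`. Hence
`G = s² m - (n-1) s c - s² f' + 2 s c f - 2 k s c - s² ∫₀ᵗ ρ`
is nonincreasing on `(0, R]`. It tends to `0` at `0⁺`, so `G ≤ 0`; using `f ≥ -k` and dividing by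
`s²` yields the comparison.
-/

open Real MeasureTheory Set Filter

/-- The solution of `s'' + H s = 0`, `s 0 = 0`, `s' 0 = 1`. -/
noncomputable def sH (H t : ℝ) : ℝ :=
  if 0 < H then Real.sin (Real.sqrt H * t) / Real.sqrt H
  else if H = 0 then t
  else Real.sinh (Real.sqrt (-H) * t) / Real.sqrt (-H)

/-- The derivative of `sH H`. -/
noncomputable def sH' (H t : ℝ) : ℝ :=
  if 0 < H then Real.cos (Real.sqrt H * t)
  else if H = 0 then 1
  else Real.cosh (Real.sqrt (-H) * t)

lemma hasDerivAt_sH (H t : ℝ) : HasDerivAt (sH H) (sH' H t) t := by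
  rcases lt_trichotomy H 0 with h | h | h
  · have h0 : √(-H) ≠ 0 := (Real.sqrt_pos.2 (by linarith)).ne'
    have e : sH H = fun t => Real.sinh (√(-H) * t) / √(-H) := by
      funext x; simp [sH, h.not_gt, h.ne]
    have e' : sH' H t = Real.cosh (√(-H) * t) := by simp [sH', h.not_gt, h.ne]
    rw [e, e']
    have := (((hasDerivAt_id' t).const_mul √(-H)).sinh).div_const √(-H)
    rwa [mul_one, mul_div_cancel_right₀ _ h0] at this
  · subst h
    have e : sH 0 = fun t => t := by funext x; simp [sH]
    rw [e]; simpa [sH'] using hasDerivAt_id' t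
  · have h0 : √H ≠ 0 := (Real.sqrt_pos.2 h).ne'
    have e : sH H = fun t => Real.sin (√H * t) / √H := by
      funext x; simp [sH, h]
    have e' : sH' H t = Real.cos (√H * t) := by simp [sH', h]
    rw [e, e']
    have := (((hasDerivAt_id' t).const_mul √H).sin).div_const √H
    rwa [mul_one, mul_div_cancel_right₀ _ h0] at this

lemma hasDerivAt_sH' (H t : ℝ) : HasDerivAt (sH' H) (-H * sH H t) t := by
  rcases lt_trichotomy H 0 with h | h | h
  · have h0 : √(-H) ≠ 0 := (Real.sqrt_pos.2 (by linarith)).ne'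
    have hs : √(-H) ^ 2 = -H := Real.sq_sqrt (by linarith)
    have e : sH' H = fun t => Real.cosh (√(-H) * t) := by
      funext x; simp [sH', h.not_gt, h.ne]
    have e' : sH H t = Real.sinh (√(-H) * t) / √(-H) := by simp [sH, h.not_gt, h.ne]
    rw [e, e']
    have := ((hasDerivAt_id' t).const_mul √(-H)).cosh
    convert this using 1
    rw [mul_one]
    rw [mul_div_assoc', div_eq_iff h0]
    linear_combination (-Real.sinh (√(-H) * t)) * hs
  · subst h
    have e : sH' 0 = fun _ => 1 := by funext x; simp [sH']
    rw [e]; simpa using hasDerivAt_const t (1 : ℝ)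
  · have h0 : √H ≠ 0 := (Real.sqrt_pos.2 h).ne'
    have hs : √H ^ 2 = H := Real.sq_sqrt h.le
    have e : sH' H = fun t => Real.cos (√H * t) := by
      funext x; simp [sH', h]
    have e' : sH H t = Real.sin (√H * t) / √H := by simp [sH, h]
    rw [e, e']
    have := ((hasDerivAt_id' t).const_mul √H).cos
    convert this using 1
    rw [mul_one]
    rw [mul_div_assoc', div_eq_iff h0]
    linear_combination (Real.sin (√H * t)) * hs

lemma sH_zero (H : ℝ) : sH H 0 = 0 := by simp [sH]

/-- Signs on `(0, R]`; the last one, `(s c)' ≥ 0`, is `cos (2 √H t) ≥ 0` when `H > 0`. -/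
lemma sH_signs {H R t : ℝ} (hHR : H ≤ 0 ∨ (0 < H ∧ R ≤ Real.pi / (4 * Real.sqrt H)))
    (ht : t ∈ Set.Ioc 0 R) :
    0 < sH H t ∧ 0 ≤ sH' H t ∧ 0 ≤ sH' H t ^ 2 - H * sH H t ^ 2 := by
  obtain ⟨ht0, htR⟩ := ht
  rcases hHR with h | ⟨h, hR⟩
  · refine ⟨?_, ?_, ?_⟩
    · rcases h.lt_or_eq with h | h
      · have h0 : 0 < √(-H) := Real.sqrt_pos.2 (by linarith)
        simp only [sH, h.not_gt, h.ne, if_false]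
        exact div_pos (Real.sinh_pos_iff.2 (by positivity)) h0
      · simpa [sH, h] using ht0
    · simp only [sH', h.not_gt, if_false]
      split_ifs
      · norm_num
      · exact (Real.cosh_pos _).le
    · nlinarith [sq_nonneg (sH' H t), mul_nonneg (neg_nonneg.2 h) (sq_nonneg (sH H t))]
  · have h0 : 0 < √H := Real.sqrt_pos.2 h
    have hs : √H ^ 2 = H := Real.sq_sqrt h.le
    have hx0 : 0 < √H * t := by positivity
    have hx : √H * t ≤ Real.pi / 4 := by
      have := htR.trans hR
      rw [le_div_iff₀ (by positivity)] at this
      linarith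
    have hpi := Real.pi_pos
    refine ⟨?_, ?_, ?_⟩
    · simp only [sH, h, if_true]
      exact div_pos (Real.sin_pos_of_pos_of_lt_pi hx0 (by linarith)) h0
    · simp only [sH', h, if_true]
      exact Real.cos_nonneg_of_mem_Icc ⟨by linarith, by linarith⟩
    · have h2 : 0 ≤ Real.cos (2 * (√H * t)) :=
        Real.cos_nonneg_of_mem_Icc ⟨by linarith, by linarith⟩
      rw [Real.cos_two_mul'] at h2
      have e : H * sH H t ^ 2 = Real.sin (√H * t) ^ 2 := by
        simp only [sH, h, if_true]
        rw [div_pow, hs]; field_simp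
      rw [e]
      simpa only [sH', h, if_true] using h2

/-- Analytic form of the first part of Theorem 1.1(a): comparison with the
model of "dimension" `n + 4k`. -/
theorem stmt_1 (n : ℕ) (hn : 2 ≤ n) (H k R : ℝ) (hk : 0 ≤ k) (hR : 0 < R)
    (hHR : H ≤ 0 ∨ (0 < H ∧ R ≤ Real.pi / (4 * Real.sqrt H)))
    (m f ρ m' f' f'' : ℝ → ℝ)
    (hmC : ContinuousOn m (Set.Ioc 0 R))
    (hm : ∀ t ∈ Set.Ioo 0 R, HasDerivAt m (m' t) t)
    (hf : ∀ t ∈ Set.Icc 0 R, HasDerivWithinAt f (f' t) (Set.Icc 0 R) t)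
    (hf' : ∀ t ∈ Set.Icc 0 R, HasDerivWithinAt f' (f'' t) (Set.Icc 0 R) t)
    (hf''C : ContinuousOn f'' (Set.Icc 0 R))
    (hfk : ∀ t ∈ Set.Icc 0 R, |f t| ≤ k)
    (hρC : ContinuousOn ρ (Set.Icc 0 R)) (hρ : ∀ t ∈ Set.Icc 0 R, 0 ≤ ρ t)
    (hRic : ∀ t ∈ Set.Ioo 0 R,
      m' t ≤ -(m t) ^ 2 / (n - 1) - (n - 1) * H + f'' t + ρ t)
    (hasymp : Filter.Tendsto
      (fun t => (sH H t) ^ 2 * (m t - (n - 1) * sH' H t / sH H t))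
      (nhdsWithin 0 (Set.Ioi 0)) (nhds 0)) :
    ∀ r ∈ Set.Ioc 0 R,
      m r - f' r ≤ (n + 4 * k - 1) * sH' H r / sH H r + ∫ t in (0:ℝ)..r, ρ t := by
  have hn1 : (0 : ℝ) < (n : ℝ) - 1 := by
    have : (2 : ℝ) ≤ n := by exact_mod_cast hn
    linarith
  have hsc : Continuous (sH H) :=
    continuous_iff_continuousAt.2 fun t => (hasDerivAt_sH H t).continuousAt
  have hcc : Continuous (sH' H) :=
    continuous_iff_continuousAt.2 fun t => (hasDerivAt_sH' H t).continuousAt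
  have hfC : ContinuousOn f (Set.Icc 0 R) := fun t ht => (hf t ht).continuousWithinAt
  have hf'C : ContinuousOn f' (Set.Icc 0 R) := fun t ht => (hf' t ht).continuousWithinAt
  have hIC : ContinuousOn (fun x => ∫ t in (0:ℝ)..x, ρ t) (Set.Icc 0 R) := by
    have := intervalIntegral.continuousOn_primitive_interval
      (f := ρ) (μ := volume) (a := 0) (b := R)
      (by rw [Set.uIcc_of_le hR.le]; exact hρC.integrableOn_Icc)
    rwa [Set.uIcc_of_le hR.le] at this
  -- `B` collects the part of `G` that is continuous up to `t = 0`.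
  set B : ℝ → ℝ := fun t => -(sH H t ^ 2 * f' t) + 2 * (sH H t * sH' H t * f t)
    - 2 * k * (sH H t * sH' H t) - sH H t ^ 2 * ∫ x in (0:ℝ)..t, ρ x with hB
  have hBC : ContinuousOn B (Set.Icc 0 R) := by
    have h1 := hsc.continuousOn (s := Set.Icc 0 R)
    have h2 := hcc.continuousOn (s := Set.Icc 0 R)
    exact ((((h1.pow 2).mul hf'C).neg.add (((h1.mul h2).mul hfC).const_mul 2)).sub
      ((h1.mul h2).const_mul (2 * k))).sub ((h1.pow 2).mul hIC)
  have hB0 : B 0 = 0 := by simp [hB, sH_zero]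
  set G : ℝ → ℝ := fun t => (sH H t ^ 2 * m t - (n - 1) * (sH H t * sH' H t)) + B t with hG
  have hGC : ContinuousOn G (Set.Ioc 0 R) := by
    have h1 := hsc.continuousOn (s := Set.Ioc 0 R)
    have h2 := hcc.continuousOn (s := Set.Ioc 0 R)
    exact (((h1.pow 2).mul hmC).sub ((h1.mul h2).const_mul ((n : ℝ) - 1))).add
      (hBC.mono Set.Ioc_subset_Icc_self)
  have hGlim : Tendsto G (nhdsWithin 0 (Set.Ioi 0)) (nhds 0) := by
    have hBl : Tendsto B (nhdsWithin 0 (Set.Ioi 0)) (nhds 0) := by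
      have := (hBC 0 ⟨le_rfl, hR.le⟩).tendsto
      rw [hB0] at this
      refine this.mono_left ?_
      rw [← nhdsWithin_Ioc_eq_nhdsGT hR]
      exact nhdsWithin_mono _ Set.Ioc_subset_Icc_self
    have := hasymp.add hBl
    rw [add_zero] at this
    refine this.congr' ?_
    filter_upwards [Ioc_mem_nhdsGT hR] with t ht
    have hs := (sH_signs hHR ht).1.ne'
    simp only [hG]
    field_simp
  have hGanti : AntitoneOn G (Set.Ioc 0 R) := by
    have key : ∀ t ∈ Set.Ioo 0 R, ∃ g, HasDerivAt G g t ∧ g ≤ 0 := by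
      intro t ht
      have htc : t ∈ Set.Icc 0 R := Set.Ioo_subset_Icc_self ht
      obtain ⟨hs, hc, hd⟩ := sH_signs hHR (Set.Ioo_subset_Ioc_self ht)
      have hnh : Set.Icc 0 R ∈ nhds t := Icc_mem_nhds ht.1 ht.2
      have ds := hasDerivAt_sH H t
      have dc := hasDerivAt_sH' H t
      have df := (hf t htc).hasDerivAt hnh
      have df' := (hf' t htc).hasDerivAt hnh
      have dI : HasDerivAt (fun x => ∫ y in (0:ℝ)..x, ρ y) (ρ t) t := by
        refine intervalIntegral.integral_hasDerivAt_right ?_ ?_ (hρC.continuousAt hnh)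
        · refine ContinuousOn.intervalIntegrable ?_
          rw [Set.uIcc_of_le ht.1.le]
          exact hρC.mono (Set.Icc_subset_Icc_right ht.2.le)
        · exact (hρC.mono Set.Ioo_subset_Icc_self).stronglyMeasurableAtFilter isOpen_Ioo t ht
      have hI : 0 ≤ ∫ y in (0:ℝ)..t, ρ y :=
        intervalIntegral.integral_nonneg ht.1.le
          fun u hu => hρ u ⟨hu.1, hu.2.trans ht.2.le⟩
      have dsc := ds.mul dc
      have ds2 := ds.pow 2
      have dG := ((ds2.mul (hm t ht)).sub (dsc.const_mul ((n : ℝ) - 1))).add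
        ((((ds2.mul df').neg.add ((dsc.mul df).const_mul 2)).sub
          (dsc.const_mul (2 * k))).sub (ds2.mul dI))
      refine ⟨_, dG, ?_⟩
      have hR' := mul_le_mul_of_nonneg_left (hRic t ht) (sq_nonneg (sH H t))
      -- completing the square
      have hsq : 2 * sH H t * sH' H t * m t - sH H t ^ 2 * (m t ^ 2 / (n - 1))
          ≤ (n - 1) * sH' H t ^ 2 := by
        have : (n - 1) * sH' H t ^ 2 - (2 * sH H t * sH' H t * m t
            - sH H t ^ 2 * (m t ^ 2 / ((n : ℝ) - 1)))
            = (sH H t * m t - (n - 1) * sH' H t) ^ 2 / (n - 1) := by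
          field_simp; ring
        have h2 : 0 ≤ (sH H t * m t - (n - 1) * sH' H t) ^ 2 / ((n : ℝ) - 1) := by positivity
        linarith
      have hfk' : f t ≤ k := (le_abs_self _).trans (hfk t htc)
      have hfd := mul_nonneg hd (sub_nonneg.2 hfk')
      have hsI := mul_nonneg (mul_nonneg hs.le hc) hI
      rw [neg_div] at hR'
      simp only [Nat.cast_ofNat, Nat.add_one_sub_one, pow_one, Pi.mul_apply, Pi.pow_apply]
      linarith
    refine antitoneOn_of_deriv_nonpos (convex_Ioc 0 R) hGC ?_ ?_
    · rw [interior_Ioc]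
      intro t ht
      obtain ⟨g, hg, -⟩ := key t ht
      exact hg.differentiableAt.differentiableWithinAt
    · rw [interior_Ioc]
      intro t ht
      obtain ⟨g, hg, h0⟩ := key t ht
      rwa [hg.deriv]
  intro r hr
  have hGr : G r ≤ 0 := by
    refine ge_of_tendsto hGlim ?_
    filter_upwards [Ioc_mem_nhdsGT hr.1] with t ht
    exact hGanti ⟨ht.1, ht.2.trans hr.2⟩ hr ht.2
  obtain ⟨hs, hc, -⟩ := sH_signs hHR hr
  have hfk' : -k ≤ f r := (abs_le.1 (hfk r (Set.Ioc_subset_Icc_self hr))).1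
  have hfd := mul_nonneg (mul_nonneg hs.le hc) (by linarith : 0 ≤ f r + k)
  have hmain : sH H r ^ 2 * (m r - f' r - ∫ t in (0:ℝ)..r, ρ t)
      ≤ (n + 4 * k - 1) * sH' H r * sH H r := by
    simp only [hG, hB] at hGr
    linarith
  have hdiv : m r - f' r - ∫ t in (0:ℝ)..r, ρ t ≤ (n + 4 * k - 1) * sH' H r / sH H r := by
    rw [le_div_iff₀ hs]
    refine le_of_mul_le_mul_right ?_ hs
    linarith
  linarith
end

section
/- Let n ≥ 2 be an integer, H < 0, and R > 0. Let m : (0,R] → ℝ be C¹, f : [0,R] → ℝ be C², and ρ : [0,R] → [0,∞) be continuous. Assume: (i) m'(t) ≤ −m(t)²/(n−1) − (n−1)H + f''(t) + ρ(t) for all t ∈ (0,R); (ii) s_H(t)²·(m(t) − (n−1)·s_H'(t)/s_H(t)) → 0 as t → 0⁺. Then for every r ∈ (0,R], m(r) − f'(r) ≤ (n−1)·s_H'(r)/s_H(r) − f(r)·(s_H²)'(r)/s_H(r)² + (1/s_H(r)²)·∫₀ʳ f(t)·(s_H²)''(t) dt + ∫₀ʳ ρ(t) dt. (The refined mean curvature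 estimate established at the start of the proof of Theorem 3.3.) -/
/-!
Write `s = sH H`, `c = sH' H` and `N = n - 1`. The quantity
`Φ t = s² m - N s c - s² f' + 2 f s c - ∫₀ᵗ f (s²)'' - s² ∫₀ᵗ ρ`
satisfies, by the Riccati inequality together with `s' = c`, `c' = -H s` and
`(s²)'' = 2 (c² - H s²)`,
`Φ' ≤ -(s m - N c)² / N - 2 s c ∫₀ᵗ ρ ≤ 0`
on `(0, R)`. Since `Φ t → 0` as `t → 0⁺`, it follows that `Φ ≤ 0` on `(0, R]`, and dividing by
`s² > 0` gives the estimate.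
-/

open Real MeasureTheory Set Filter

lemma sH_neg {H : ℝ} (hH : H < 0) (t : ℝ) :
    sH H t = Real.sinh (Real.sqrt (-H) * t) / Real.sqrt (-H) := by
  simp [sH, hH.ne, not_lt.2 hH.le]

lemma sH'_neg {H : ℝ} (hH : H < 0) (t : ℝ) :
    sH' H t = Real.cosh (Real.sqrt (-H) * t) := by
  simp [sH', hH.ne, not_lt.2 hH.le]

lemma sH_pos {H : ℝ} (hH : H < 0) {t : ℝ} (ht : 0 < t) : 0 < sH H t := by
  have hk : 0 < Real.sqrt (-H) := Real.sqrt_pos.2 (by linarith)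
  rw [sH_neg hH]
  exact div_pos (Real.sinh_pos_iff.2 (mul_pos hk ht)) hk

lemma sH'_pos {H : ℝ} (hH : H < 0) (t : ℝ) : 0 < sH' H t := by
  rw [sH'_neg hH]
  exact Real.cosh_pos _

lemma sH_hasDerivAt {H : ℝ} (hH : H < 0) (t : ℝ) : HasDerivAt (sH H) (sH' H t) t := by
  have hk : 0 < Real.sqrt (-H) := Real.sqrt_pos.2 (by linarith)
  rw [funext (sH_neg hH), sH'_neg hH]
  have h := (((hasDerivAt_id t).const_mul (Real.sqrt (-H))).sinh).div_const (Real.sqrt (-H))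
  refine h.congr_deriv ?_
  rw [mul_one, mul_div_assoc, div_self hk.ne', mul_one, id_eq]

lemma sH'_hasDerivAt {H : ℝ} (hH : H < 0) (t : ℝ) : HasDerivAt (sH' H) (-H * sH H t) t := by
  have hk : 0 < Real.sqrt (-H) := Real.sqrt_pos.2 (by linarith)
  have hk2 : Real.sqrt (-H) ^ 2 = -H := Real.sq_sqrt (by linarith)
  rw [funext (sH'_neg hH), sH_neg hH]
  have h := ((hasDerivAt_id t).const_mul (Real.sqrt (-H))).cosh
  refine h.congr_deriv ?_
  rw [mul_div_assoc', eq_div_iff hk.ne', id_eq]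
  linear_combination Real.sinh (Real.sqrt (-H) * t) * hk2

lemma cosh_two_sqrt_mul {H : ℝ} (hH : H < 0) (t : ℝ) :
    Real.cosh (2 * Real.sqrt (-H) * t) = sH' H t ^ 2 - H * sH H t ^ 2 := by
  have hk : 0 < Real.sqrt (-H) := Real.sqrt_pos.2 (by linarith)
  have hk2 : Real.sqrt (-H) ^ 2 = -H := Real.sq_sqrt (by linarith)
  rw [sH'_neg hH, sH_neg hH, mul_assoc, Real.cosh_two_mul, div_pow, hk2]
  field_simp [hH.ne]
  ring

/-- A function continuous on `[0, R]` has an everywhere continuous function agreeing with its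
integral from `0` on `[0, R]`; this avoids one-sided arguments at the endpoints. -/
lemma exists_primitive {R : ℝ} (hR : 0 < R) {g : ℝ → ℝ} (hg : ContinuousOn g (Set.Icc 0 R)) :
    ∃ G : ℝ → ℝ, G 0 = 0 ∧ Continuous G ∧ (∀ t ∈ Set.Ioo 0 R, HasDerivAt G (g t) t) ∧
      ∀ r ∈ Set.Icc 0 R, G r = ∫ t in (0:ℝ)..r, g t := by
  have hc : Continuous (Set.IccExtend hR.le ((Set.Icc 0 R).domRestrict g)) :=
    (continuousOn_iff_continuous_domRestrict.1 hg).Icc_extend'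
  have he : ∀ t ∈ Set.Icc 0 R, Set.IccExtend hR.le ((Set.Icc 0 R).domRestrict g) t = g t := by
    intro t ht
    rw [Set.IccExtend_of_mem _ _ ht]
    rfl
  generalize Set.IccExtend hR.le ((Set.Icc 0 R).domRestrict g) = h at hc he
  refine ⟨fun r => ∫ t in (0:ℝ)..r, h t, by simp, ?_, ?_, ?_⟩
  · exact intervalIntegral.continuous_primitive (fun a b => hc.intervalIntegrable a b) 0
  · intro t ht
    rw [← he t ⟨ht.1.le, ht.2.le⟩]
    exact hc.integral_hasStrictDerivAt 0 t |>.hasDerivAt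
  · intro r hr
    refine intervalIntegral.integral_congr fun t ht => ?_
    rw [Set.uIcc_of_le hr.1] at ht
    exact he t ⟨ht.1, ht.2.trans hr.2⟩

/-- The refined mean curvature estimate established at the start of the
proof of Theorem 3.3 (case `H < 0`); here `(sH H)²` has derivative
`2 · sH H · sH' H` and second derivative `2 cosh (2√(-H) t)`. -/
theorem stmt_15 (n : ℕ) (hn : 2 ≤ n) (H R : ℝ) (hH : H < 0) (hR : 0 < R)
    (m f ρ m' f' f'' : ℝ → ℝ)
    (hmC : ContinuousOn m (Set.Ioc 0 R))
    (hm : ∀ t ∈ Set.Ioo 0 R, HasDerivAt m (m' t) t)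
    (hf : ∀ t ∈ Set.Icc 0 R, HasDerivWithinAt f (f' t) (Set.Icc 0 R) t)
    (hf' : ∀ t ∈ Set.Icc 0 R, HasDerivWithinAt f' (f'' t) (Set.Icc 0 R) t)
    (hf''C : ContinuousOn f'' (Set.Icc 0 R))
    (hρC : ContinuousOn ρ (Set.Icc 0 R)) (hρ : ∀ t ∈ Set.Icc 0 R, 0 ≤ ρ t)
    (hRic : ∀ t ∈ Set.Ioo 0 R,
      m' t ≤ -(m t) ^ 2 / (n - 1) - (n - 1) * H + f'' t + ρ t)
    (hasymp : Filter.Tendsto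
      (fun t => (sH H t) ^ 2 * (m t - (n - 1) * sH' H t / sH H t))
      (nhdsWithin 0 (Set.Ioi 0)) (nhds 0)) :
    ∀ r ∈ Set.Ioc 0 R,
      m r - f' r ≤ (n - 1) * sH' H r / sH H r
        - f r * (2 * sH H r * sH' H r) / (sH H r) ^ 2
        + (1 / (sH H r) ^ 2) *
            (∫ t in (0:ℝ)..r, f t * (2 * Real.cosh (2 * Real.sqrt (-H) * t)))
        + ∫ t in (0:ℝ)..r, ρ t := by
  have hN : (0:ℝ) < (n:ℝ) - 1 := by
    have : (2:ℝ) ≤ n := by exact_mod_cast hn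
    linarith
  generalize (n:ℝ) - 1 = N at *
  have hfC : ContinuousOn f (Set.Icc 0 R) := fun t ht => (hf t ht).continuousWithinAt
  have hf'C : ContinuousOn f' (Set.Icc 0 R) := fun t ht => (hf' t ht).continuousWithinAt
  have hsC : Continuous (sH H) :=
    continuous_iff_continuousAt.2 fun t => (sH_hasDerivAt hH t).continuousAt
  have hcC : Continuous (sH' H) :=
    continuous_iff_continuousAt.2 fun t => (sH'_hasDerivAt hH t).continuousAt
  have hs0 : sH H 0 = 0 := by simp [sH_neg hH]
  obtain ⟨P, hP0, hPC, hPd, hPi⟩ := exists_primitive hR hρC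
  obtain ⟨Q, hQ0, hQC, hQd, hQi⟩ := exists_primitive hR
    (g := fun t => f t * (2 * Real.cosh (2 * Real.sqrt (-H) * t)))
    (hfC.mul (by fun_prop))
  have hPnn : ∀ r ∈ Set.Icc 0 R, 0 ≤ P r := by
    intro r hr
    rw [hPi r hr]
    exact intervalIntegral.integral_nonneg hr.1 fun t ht => hρ t ⟨ht.1, ht.2.trans hr.2⟩
  -- `B` collects the terms of `Φ` that extend continuously by `0` to `t = 0`.
  let B : ℝ → ℝ := fun t =>
    -(sH H t ^ 2 * f' t) + 2 * f t * sH H t * sH' H t - Q t - sH H t ^ 2 * P t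
  let Φ : ℝ → ℝ := fun t => sH H t ^ 2 * m t - N * sH H t * sH' H t + B t
  have hBC : ContinuousOn B (Set.Icc 0 R) := by
    have h1 := hsC.continuousOn (s := Set.Icc 0 R)
    have h2 := hcC.continuousOn (s := Set.Icc 0 R)
    exact ((((h1.pow 2).mul hf'C).neg.add (((continuousOn_const.mul hfC).mul h1).mul h2)).sub
      hQC.continuousOn).sub ((h1.pow 2).mul hPC.continuousOn)
  have hΦC : ContinuousOn Φ (Set.Ioc 0 R) := by
    refine ContinuousOn.add ?_ (hBC.mono Set.Ioc_subset_Icc_self)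
    exact ((hsC.pow 2).continuousOn.mul hmC).sub
      ((continuous_const.mul hsC).mul hcC).continuousOn
  have hΦlim : Filter.Tendsto Φ (nhdsWithin 0 (Set.Ioi 0)) (nhds 0) := by
    have hB0 : B 0 = 0 := by simp [B, hs0, hQ0]
    have hBlim : Filter.Tendsto B (nhdsWithin 0 (Set.Ioi 0)) (nhds 0) := by
      have h := hBC 0 ⟨le_rfl, hR.le⟩
      rw [ContinuousWithinAt, hB0] at h
      rw [← nhdsWithin_Ioc_eq_nhdsGT hR]
      exact h.mono_left (nhdsWithin_mono _ Set.Ioc_subset_Icc_self)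
    have h := hasymp.add hBlim
    rw [add_zero] at h
    refine h.congr' ?_
    filter_upwards [self_mem_nhdsWithin] with t ht
    have hs := (sH_pos hH ht).ne'
    simp only [Φ]
    field_simp
  have hΦd : ∀ t ∈ Set.Ioo 0 R, ∃ d ≤ 0, HasDerivAt Φ d t := by
    intro t ht
    have htI : t ∈ Set.Icc 0 R := ⟨ht.1.le, ht.2.le⟩
    have hnb : Set.Icc 0 R ∈ nhds t := Icc_mem_nhds ht.1 ht.2
    have ds := sH_hasDerivAt hH t
    have dc := sH'_hasDerivAt hH t
    have df := (hf t htI).hasDerivAt hnb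
    have df' := (hf' t htI).hasDerivAt hnb
    have hd := (((ds.pow 2).mul (hm t ht)).sub ((ds.const_mul N).mul dc)).add
      ((((((ds.pow 2).mul df').neg).add (((df.const_mul 2).mul ds).mul dc)).sub
        (hQd t ht)).sub ((ds.pow 2).mul (hPd t ht)))
    refine ⟨_, ?_, hd⟩
    have hs := sH_pos hH ht.1
    have hc := sH'_pos hH t
    have hp := hPnn t htI
    have hric := mul_le_mul_of_nonneg_left (hRic t ht) (sq_nonneg (sH H t))
    have hsq : 0 ≤ (sH H t * m t - N * sH' H t) ^ 2 / N := by positivity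
    have hexp : (sH H t * m t - N * sH' H t) ^ 2 / N
        = sH H t ^ 2 * (m t ^ 2 / N) - 2 * sH H t * sH' H t * m t + N * sH' H t ^ 2 := by
      field_simp
      ring
    have hneg : -(m t) ^ 2 / N = -(m t ^ 2 / N) := neg_div _ _
    have hscp : 0 ≤ 2 * sH H t * sH' H t * P t := by positivity
    rw [hneg] at hric
    simp only [cosh_two_sqrt_mul hH, Pi.pow_apply, Pi.mul_apply]
    norm_num
    linarith
  have hanti : AntitoneOn Φ (Set.Ioc 0 R) := by
    refine antitoneOn_of_deriv_nonpos (convex_Ioc 0 R) hΦC ?_ ?_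
    · rw [interior_Ioc]
      intro t ht
      obtain ⟨d, -, hd⟩ := hΦd t ht
      exact hd.differentiableAt.differentiableWithinAt
    · rw [interior_Ioc]
      intro t ht
      obtain ⟨d, hd0, hd⟩ := hΦd t ht
      rwa [hd.deriv]
  intro r hr
  have hΦr : Φ r ≤ 0 := by
    refine ge_of_tendsto hΦlim ?_
    filter_upwards [Ioc_mem_nhdsGT hr.1] with t ht
    exact hanti ⟨ht.1, ht.2.trans hr.2⟩ hr ht.2
  have hrI : r ∈ Set.Icc 0 R := ⟨hr.1.le, hr.2⟩
  have hs := sH_pos hH hr.1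
  rw [← hPi r hrI, ← hQi r hrI]
  have hdiff : m r - f' r - (N * sH' H r / sH H r
        - f r * (2 * sH H r * sH' H r) / (sH H r) ^ 2
        + (1 / (sH H r) ^ 2) * Q r + P r) = Φ r / sH H r ^ 2 := by
    simp only [Φ, B]
    field_simp
    ring
  have := div_nonpos_of_nonpos_of_nonneg hΦr (sq_nonneg (sH H r))
  linarith
end
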